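/- For any 0 < α < 1 and 0 < ϱ < 1, the Shiryaev–Roberts procedure T(α,ϱ) = inf{n ≥ 1 : R_n ≥ (1−α)/(ϱα)} belongs to the Bayesian class Δ(α,ϱ), i.e., Σ_{k≥0} ϱ(1−ϱ)^k P_∞(T(α,ϱ) ≤ k) ≤ α. -/

import Mathlib

/-!
Write `q = 1 - ϱ`, `h` for the threshold and `T` for the stopping time. On `{T = n}` the statistic
`R_n` is at least `h`, and the densities in `R_n` turn `P∞` into the `P_k`, so
`h * P∞(T = n) ≤ ∑_{k < n} P_k(T = n)` (`threshold_mul_le`). Let `A = ∑ ϱ q^k P∞(T ≤ k)`; summing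
the geometric tails gives `A = ∑ q^n P∞(T = n)` (`tsum_falseAlarm_eq`). Multiplying the first
bound by `ϱ q^n`, using `q^n ≤ q^k` for `k < n`, and exchanging the sums gives
`ϱ h A ≤ ∑ ϱ q^k P_k(T > k) = ∑ ϱ q^k P∞(T > k) = 1 - A`,
since `P_k = P∞` on `F k`. As `ϱ h + 1 = 1 / α`, this says `A ≤ α`.
-/

open MeasureTheory Filter Set Topology ENNReal

noncomputable section

/-- A general change-point model: a filtration `F` on `Ω`, probability measures `P k`
(the change occurs immediately after time `k`) and `Pinf` (no change), such that `P k`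
and `Pinf` agree on `F n` for `n ≤ k` and are mutually absolutely continuous
on `F n` for `n > k`. -/
structure ChangePointModel (Ω : Type) [m0 : MeasurableSpace Ω] where
  F : ℕ → MeasurableSpace Ω
  F_le : ∀ n, F n ≤ m0
  F_mono : Monotone F
  F_zero : F 0 = ⊥
  P : ℕ → Measure Ω
  Pinf : Measure Ω
  P_prob : ∀ k, IsProbabilityMeasure (P k)
  Pinf_prob : IsProbabilityMeasure Pinf
  agree : ∀ k n : ℕ, n ≤ k → (P k).trim (F_le n) = Pinf.trim (F_le n)
  ac₁ : ∀ k n : ℕ, k < n → (P k).trim (F_le n) ≪ Pinf.trim (F_le n)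
  ac₂ : ∀ k n : ℕ, k < n → Pinf.trim (F_le n) ≪ (P k).trim (F_le n)

namespace ChangePointModel

variable {Ω : Type} [m0 : MeasurableSpace Ω] (M : ChangePointModel Ω)

/-- The log-likelihood ratio `Z n k = log (d(P k|F n)/d(P∞|F n))`. -/
def Z (n k : ℕ) (ω : Ω) : ℝ :=
  Real.log ((((M.P k).trim (M.F_le n)).rnDeriv (M.Pinf.trim (M.F_le n))) ω).toReal

/-- A detection procedure: a stopping time of the filtration `F` with values in `{1,2,…,∞}`. -/
def IsDetection (τ : Ω → ℕ∞) : Prop :=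
  (∀ ω, 1 ≤ τ ω) ∧ ∀ n : ℕ, MeasurableSet[M.F n] {ω | τ ω ≤ (n : ℕ∞)}

/-- The detection risk `R_ν(τ) = E_ν (τ - ν)⁺`. -/
def risk (ν : ℕ) (τ : Ω → ℕ∞) : ℝ≥0∞ :=
  ∫⁻ ω, ((τ ω - (ν : ℕ∞) : ℕ∞) : ℝ≥0∞) ∂(M.P ν)

/-- The conditional detection risk `R*_ν(τ) = E_ν (τ - ν | τ > ν)`. -/
def crisk (ν : ℕ) (τ : Ω → ℕ∞) : ℝ≥0∞ :=
  M.risk ν τ / M.P ν {ω | (ν : ℕ∞) < τ ω}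

/-- The moment-`ℓ` detection risk `E_ν ((τ - ν)⁺)^ℓ`. -/
def riskPow (ℓ : ℝ) (ν : ℕ) (τ : Ω → ℕ∞) : ℝ≥0∞ :=
  ∫⁻ ω, ((τ ω - (ν : ℕ∞) : ℕ∞) : ℝ≥0∞) ^ ℓ ∂(M.P ν)

/-- The conditional moment-`ℓ` detection risk `E_ν ((τ - ν)^ℓ | τ > ν)`. -/
def criskPow (ℓ : ℝ) (ν : ℕ) (τ : Ω → ℕ∞) : ℝ≥0∞ :=
  M.riskPow ℓ ν τ / M.P ν {ω | (ν : ℕ∞) < τ ω}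

/-- The Bayesian class `Δ(α,ϱ)` of detection procedures with weighted probability of
false alarm at most `α` (geometric prior with parameter `ϱ`). -/
def Delta (α ϱ : ℝ) : Set (Ω → ℕ∞) :=
  {τ | M.IsDetection τ ∧
    ∑' k : ℕ, ENNReal.ofReal (ϱ * (1 - ϱ) ^ k) * M.Pinf {ω | τ ω ≤ (k : ℕ∞)}
      ≤ ENNReal.ofReal α}

/-- The Shiryaev–Roberts statistic `R_n = ∑_{k=1}^n exp (Z_n^{k-1})`. -/
def SRstat (n : ℕ) (ω : Ω) : ℝ :=
  ∑ k ∈ Finset.range n, Real.exp (M.Z n k ω)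

/-- The Shiryaev–Roberts procedure with threshold `h`. -/
def SR (h : ℝ) (ω : Ω) : ℕ∞ :=
  sInf {n : ℕ∞ | ∃ m : ℕ, n = (m : ℕ∞) ∧ 1 ≤ m ∧ h ≤ M.SRstat m ω}

/-- Condition (A1): `Z (k+n) k / n → I` almost surely under `P k`, for every `k`. -/
def CondA1 (I : ℝ) : Prop :=
  ∀ k : ℕ, ∀ᵐ ω ∂(M.P k),
    Tendsto (fun n : ℕ => M.Z (k + n) k ω / n) atTop (𝓝 I)

/-- Condition (A2): uniform complete convergence of `Z (k+n) k / n` to `I`. -/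
def CondA2 (I : ℝ) : Prop :=
  ∀ ε : ℝ, 0 < ε →
    (∑' n : ℕ, ⨆ k : ℕ,
      M.P k {ω | ε < |M.Z (k + (n + 1)) k ω / (n + 1) - I|}) < ⊤

/-- Uniform `r`-complete convergence of `Z (k+n) k / n` to `I`. -/
def CondAr (r I : ℝ) : Prop :=
  ∀ ε : ℝ, 0 < ε →
    (∑' n : ℕ, ENNReal.ofReal ((n + 1 : ℝ) ^ (r - 1)) * ⨆ k : ℕ,
      M.P k {ω | ε < |M.Z (k + (n + 1)) k ω / (n + 1) - I|}) < ⊤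

/-- The class `H(β,k*,m*)` : local probability of a false alarm in windows of
length `m*` starting at `1 ≤ k ≤ k* - m*` is at most `β`. -/
def Hclass (β : ℝ) (kstar mstar : ℕ) : Set (Ω → ℕ∞) :=
  {τ | M.IsDetection τ ∧ ∀ k : ℕ, 1 ≤ k → k + mstar ≤ kstar →
    M.Pinf {ω | (k : ℕ∞) ≤ τ ω ∧ τ ω < ((k + mstar : ℕ) : ℕ∞)} ≤ ENNReal.ofReal β}

/-- The class `H*(β,k*,m*)` : local conditional probability of a false alarm
`P_∞(τ < k+m* | τ > k)` is at most `β` for `1 ≤ k ≤ k* - m*`. -/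
def HclassStar (β : ℝ) (kstar mstar : ℕ) : Set (Ω → ℕ∞) :=
  {τ | M.IsDetection τ ∧ ∀ k : ℕ, 1 ≤ k → k + mstar ≤ kstar →
    M.Pinf {ω | (k : ℕ∞) < τ ω ∧ τ ω < ((k + mstar : ℕ) : ℕ∞)}
        / M.Pinf {ω | (k : ℕ∞) < τ ω} ≤ ENNReal.ofReal β}

end ChangePointModel

/-- `ϱ_{1,β} = 1/(1+|log β|)`. -/
def rho1 (β : ℝ) : ℝ := 1 / (1 + |Real.log β|)

/-- `ϱ_{2,β} = ϱ_{1,β}/(1+|log|log β||)`. -/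
def rho2 (β : ℝ) : ℝ := rho1 β / (1 + |Real.log (|Real.log β|)|)

/-- `α₁(β,m*) = β + (1-ϱ_{1,β})^{m*+1}`. -/
def alpha1 (β : ℝ) (m : ℕ) : ℝ := β + (1 - rho1 β) ^ (m + 1)

/-- `α₂(β,k*) = β (1-ϱ_{2,β})^{k*}`. -/
def alpha2 (β : ℝ) (k : ℕ) : ℝ := β * (1 - rho2 β) ^ k

/-- `α₃(β,k*) = β (1-ϱ_{2,β})^{k*} / (1+β)`. -/
def alpha3 (β : ℝ) (k : ℕ) : ℝ := β * (1 - rho2 β) ^ k / (1 + β)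

namespace ChangePointModel

variable {Ω : Type} [m0 : MeasurableSpace Ω] (M : ChangePointModel Ω)

lemma measurable_SRstat (n : ℕ) : Measurable[M.F n] (M.SRstat n) := by
  unfold SRstat Z
  refine Finset.measurable_sum _ fun k _ => ?_
  exact Real.measurable_exp.comp (Real.measurable_log.comp
    (ENNReal.measurable_toReal.comp (Measure.measurable_rnDeriv _ _)))

/-- `exp Z` is the likelihood ratio almost surely; mutual absolute continuity excludes the points
where the density is `0` or `∞`, at which `Real.log` takes a junk value. -/
lemma ofReal_exp_Z_ae {k n : ℕ} (hkn : k < n) :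
    ∀ᵐ ω ∂(M.Pinf.trim (M.F_le n)), ENNReal.ofReal (Real.exp (M.Z n k ω)) =
      ((M.P k).trim (M.F_le n)).rnDeriv (M.Pinf.trim (M.F_le n)) ω := by
  have := M.P_prob k
  have := M.Pinf_prob
  have hpos := (M.ac₂ k n hkn).ae_le (Measure.rnDeriv_pos (M.ac₁ k n hkn))
  have hfin := Measure.rnDeriv_lt_top ((M.P k).trim (M.F_le n)) (M.Pinf.trim (M.F_le n))
  filter_upwards [hpos, hfin] with ω h1 h2
  unfold Z
  rw [Real.exp_log (ENNReal.toReal_pos h1.ne' h2.ne), ENNReal.ofReal_toReal h2.ne]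

/-- Change of measure on an `F n`-event where the statistic has reached the threshold. -/
lemma threshold_mul_le {n : ℕ} {h : ℝ} {B : Set Ω} (hB : MeasurableSet[M.F n] B)
    (hBh : ∀ ω ∈ B, h ≤ M.SRstat n ω) :
    ENNReal.ofReal h * M.Pinf B ≤ ∑ k ∈ Finset.range n, M.P k B := by
  have := M.P_prob
  have := M.Pinf_prob
  have hae : ∀ᵐ ω ∂(M.Pinf.trim (M.F_le n)), ∀ k ∈ Finset.range n,
      ENNReal.ofReal (Real.exp (M.Z n k ω)) =
      ((M.P k).trim (M.F_le n)).rnDeriv (M.Pinf.trim (M.F_le n)) ω :=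
    (Finset.eventually_all _).2 fun k hk => M.ofReal_exp_Z_ae (Finset.mem_range.1 hk)
  calc ENNReal.ofReal h * M.Pinf B
      = ∫⁻ _ in B, ENNReal.ofReal h ∂(M.Pinf.trim (M.F_le n)) := by
        rw [setLIntegral_const, trim_measurableSet_eq _ hB]
    _ ≤ ∫⁻ ω in B, ∑ k ∈ Finset.range n,
          ((M.P k).trim (M.F_le n)).rnDeriv (M.Pinf.trim (M.F_le n)) ω
          ∂(M.Pinf.trim (M.F_le n)) := by
        refine lintegral_mono_ae ?_
        filter_upwards [ae_restrict_of_ae hae, ae_restrict_mem hB] with ω h1 h2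
        rw [← Finset.sum_congr rfl h1, ← ENNReal.ofReal_sum_of_nonneg
          (fun _ _ => (Real.exp_pos _).le)]
        exact ENNReal.ofReal_le_ofReal (hBh ω h2)
    _ = ∑ k ∈ Finset.range n, M.P k B := by
        rw [lintegral_finsetSum _ (fun k _ => Measure.measurable_rnDeriv _ _)]
        refine Finset.sum_congr rfl fun k hk => ?_
        rw [Measure.setLIntegral_rnDeriv (M.ac₁ k n (Finset.mem_range.1 hk)),
          trim_measurableSet_eq _ hB]

lemma SR_eq_coe {h : ℝ} {ω : Ω} {n : ℕ} (hn : M.SR h ω = n) : h ≤ M.SRstat n ω := by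
  have hne : {n : ℕ∞ | ∃ m : ℕ, n = (m : ℕ∞) ∧ 1 ≤ m ∧ h ≤ M.SRstat m ω}.Nonempty := by
    by_contra hc
    rw [Set.not_nonempty_iff_eq_empty] at hc
    simp [SR, hc] at hn
  obtain ⟨m, hm, -, hh⟩ := csInf_mem hne
  have : m = n := by
    have := hm.symm.trans hn
    exact_mod_cast this
  exact this ▸ hh

lemma SR_le_iff {h : ℝ} {ω : Ω} {n : ℕ} :
    M.SR h ω ≤ n ↔ ∃ m ∈ Set.Icc 1 n, h ≤ M.SRstat m ω := by
  constructor
  · intro hle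
    have hne : {n : ℕ∞ | ∃ m : ℕ, n = (m : ℕ∞) ∧ 1 ≤ m ∧ h ≤ M.SRstat m ω}.Nonempty := by
      by_contra hc
      rw [Set.not_nonempty_iff_eq_empty] at hc
      simp [SR, hc] at hle
    obtain ⟨m, hm, h1, hh⟩ := csInf_mem hne
    refine ⟨m, ⟨h1, ?_⟩, hh⟩
    have := hm.symm.trans_le hle
    exact_mod_cast this
  · rintro ⟨m, ⟨h1, h2⟩, hh⟩
    exact (sInf_le ⟨m, rfl, h1, hh⟩ : M.SR h ω ≤ (m : ℕ∞)).trans (by exact_mod_cast h2)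

lemma isDetection_SR (h : ℝ) : M.IsDetection (M.SR h) := by
  refine ⟨fun ω => le_sInf ?_, fun n => ?_⟩
  · rintro _ ⟨m, rfl, hm, -⟩
    exact_mod_cast hm
  · have : {ω | M.SR h ω ≤ (n : ℕ∞)} = ⋃ m ∈ Set.Icc 1 n, {ω | h ≤ M.SRstat m ω} := by
      ext ω
      simp only [Set.mem_ofPred_eq, SR_le_iff, Set.mem_iUnion, exists_prop]
    rw [this]
    refine MeasurableSet.biUnion (Set.to_countable _) fun m hm => ?_
    exact M.F_mono hm.2 _ (measurableSet_le measurable_const (M.measurable_SRstat m))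

variable {M}

lemma IsDetection.measurableSet_eq {τ : Ω → ℕ∞} (hτ : M.IsDetection τ) (n : ℕ) :
    MeasurableSet[M.F n] {ω | τ ω = n} := by
  rcases n with _ | n
  · convert @MeasurableSet.empty _ (M.F 0)
    ext ω
    have := hτ.1 ω
    simp only [Set.mem_ofPred_eq, Set.mem_empty_iff_false, iff_false]
    rintro h0
    simp [h0] at this
  · have : {ω | τ ω = (n + 1 : ℕ)} = {ω | τ ω ≤ (n + 1 : ℕ)} \ {ω | τ ω ≤ (n : ℕ)} := by
      ext ω
      simp only [Set.mem_ofPred_eq, Set.mem_sdiff, not_le]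
      rcases eq_or_ne (τ ω) ⊤ with ht | ht
      · simp [ht, eq_comm]
      · obtain ⟨m, hm⟩ := ENat.ne_top_iff_exists.1 ht
        rw [← hm]
        norm_cast
        omega
    rw [this]
    exact MeasurableSet.diff (hτ.2 _) (M.F_mono (Nat.le_succ n) _ (hτ.2 _))

lemma IsDetection.measure_le_eq {τ : Ω → ℕ∞} (hτ : M.IsDetection τ) (k : ℕ) :
    M.Pinf {ω | τ ω ≤ (k : ℕ∞)} = ∑' n : ℕ, if n ≤ k then M.Pinf {ω | τ ω = n} else 0 := by
  have : {ω | τ ω ≤ (k : ℕ∞)} = ⋃ n ∈ Finset.range (k + 1), {ω | τ ω = (n : ℕ)} := by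
    ext ω
    simp only [Set.mem_ofPred_eq, Set.mem_iUnion, Finset.mem_range, exists_prop]
    constructor
    · intro hle
      obtain ⟨m, hm⟩ := ENat.ne_top_iff_exists.1 (ne_top_of_le_ne_top (ENat.natCast_ne_top k) hle)
      rw [← hm] at hle ⊢
      exact ⟨m, Nat.lt_succ_of_le (by exact_mod_cast hle), rfl⟩
    · rintro ⟨m, hm, he⟩
      rw [he]
      exact_mod_cast Nat.lt_succ_iff.1 hm
  rw [this, measure_biUnion_finset, tsum_eq_sum (s := Finset.range (k + 1))]
  · refine Finset.sum_congr rfl fun n hn => ?_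
    rw [if_pos (Nat.lt_succ_iff.1 (Finset.mem_range.1 hn))]
  · intro n hn
    rw [if_neg]
    simpa using hn
  · intro i _ j _ hij
    refine Set.disjoint_left.2 fun ω hi hj => hij ?_
    have : (i : ℕ∞) = j := (Eq.symm hi).trans hj
    exact_mod_cast this
  · exact fun n _ => M.F_le n _ (hτ.measurableSet_eq n)

/-- Countable additivity and `P k = P∞` on `F k`. -/
lemma IsDetection.tsum_measure_eq_le {τ : Ω → ℕ∞} (hτ : M.IsDetection τ) (k : ℕ) :
    (∑' n : ℕ, if k < n then M.P k {ω | τ ω = n} else 0) ≤ M.Pinf {ω | τ ω ≤ (k : ℕ∞)}ᶜ := by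
  have hm := (hτ.2 k).compl
  rw [← trim_measurableSet_eq (M.F_le k) hm, ← M.agree k k le_rfl,
    trim_measurableSet_eq (M.F_le k) hm]
  have h1 : ∀ n : ℕ, (if k < n then M.P k {ω | τ ω = n} else 0) =
      M.P k (if k < n then {ω | τ ω = n} else ∅) := by
    intro n
    split_ifs <;> simp
  simp_rw [h1]
  rw [← measure_iUnion]
  · refine measure_mono (Set.iUnion_subset fun n ω hω => ?_)
    split_ifs at hω with hkn
    · have : τ ω = n := hω
      simp only [Set.mem_compl_iff, Set.mem_ofPred_eq, this, not_le]
      exact_mod_cast hkn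
    · exact hω.elim
  · intro i j hij
    refine Set.disjoint_left.2 fun ω hi hj => hij ?_
    dsimp only at hi hj
    split_ifs at hi hj
    · have : (i : ℕ∞) = j := (Eq.symm hi).trans hj
      exact_mod_cast this
    all_goals first | exact hi.elim | exact hj.elim
  · intro n
    split_ifs
    · exact M.F_le n _ (hτ.measurableSet_eq n)
    · exact MeasurableSet.empty

end ChangePointModel

lemma tsum_geometric_tail {ϱ : ℝ} (hϱ : ϱ ∈ Set.Ioo (0 : ℝ) 1) (n : ℕ) :
    (∑' k : ℕ, if n ≤ k then ENNReal.ofReal (ϱ * (1 - ϱ) ^ k) else 0) =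
      ENNReal.ofReal ((1 - ϱ) ^ n) := by
  have hq : 0 ≤ 1 - ϱ := by linarith [hϱ.2]
  have hq1 : 1 - ϱ < 1 := by linarith [hϱ.1]
  have hs : ∀ m, HasSum (fun k : ℕ => ϱ * (1 - ϱ) ^ (k + m)) ((1 - ϱ) ^ m) := by
    intro m
    have h := (hasSum_geometric_of_lt_one hq hq1).mul_left (ϱ * (1 - ϱ) ^ m)
    have hϱ0 := hϱ.1.ne'
    have e1 : (fun k : ℕ => ϱ * (1 - ϱ) ^ m * (1 - ϱ) ^ k) = fun k => ϱ * (1 - ϱ) ^ (k + m) := by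
      ext k
      ring
    have e2 : ϱ * (1 - ϱ) ^ m * (1 - (1 - ϱ))⁻¹ = (1 - ϱ) ^ m := by
      rw [_root_.sub_sub_cancel]
      field_simp
    rwa [e1, e2] at h
  rw [← (ENNReal.summable.sum_add_tsum_nat_add' (k := n)), Finset.sum_eq_zero, zero_add]
  · simp only [Nat.le_add_left, if_true]
    rw [← ENNReal.ofReal_tsum_of_nonneg _ (hs n).summable, (hs n).tsum_eq]
    exact fun k => mul_nonneg hϱ.1.le (pow_nonneg hq _)
  · intro k hk
    rw [if_neg (by simpa using hk)]

/-- Summation by parts: the weighted false alarm probability is `E∞ (1 - ϱ)^τ`. -/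
lemma ChangePointModel.IsDetection.tsum_falseAlarm_eq {Ω : Type} [m0 : MeasurableSpace Ω]
    {M : ChangePointModel Ω} {τ : Ω → ℕ∞} (hτ : M.IsDetection τ) {ϱ : ℝ}
    (hϱ : ϱ ∈ Set.Ioo (0 : ℝ) 1) :
    ∑' k : ℕ, ENNReal.ofReal (ϱ * (1 - ϱ) ^ k) * M.Pinf {ω | τ ω ≤ (k : ℕ∞)} =
      ∑' n : ℕ, ENNReal.ofReal ((1 - ϱ) ^ n) * M.Pinf {ω | τ ω = n} := by
  simp_rw [hτ.measure_le_eq, ← ENNReal.tsum_mul_left]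
  rw [ENNReal.tsum_comm]
  refine tsum_congr fun n => ?_
  rw [← tsum_geometric_tail hϱ n, ← ENNReal.tsum_mul_right]
  refine tsum_congr fun k => ?_
  split_ifs <;> simp

/-- For any `0 < α < 1` and `0 < ϱ < 1`, the Shiryaev–Roberts procedure
`T(α,ϱ) = inf{n ≥ 1 : R_n ≥ (1-α)/(ϱα)}` belongs to the Bayesian class `Δ(α,ϱ)`. -/
theorem statement1
    {Ω : Type} [m0 : MeasurableSpace Ω] (M : ChangePointModel Ω)
    (α ϱ : ℝ) (hα : α ∈ Set.Ioo (0 : ℝ) 1) (hϱ : ϱ ∈ Set.Ioo (0 : ℝ) 1) :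
    M.SR ((1 - α) / (ϱ * α)) ∈ M.Delta α ϱ := by
  have hq : 0 ≤ 1 - ϱ := by linarith [hϱ.2]
  have hq1 : 1 - ϱ ≤ 1 := by linarith [hϱ.1]
  have hα0 := hα.1
  have hϱ0 := hϱ.1
  have := M.Pinf_prob
  set h : ℝ := (1 - α) / (ϱ * α) with hh
  have hh0 : 0 ≤ h := div_nonneg (by linarith [hα.2]) (by positivity)
  have hτ := M.isDetection_SR h
  refine ⟨hτ, ?_⟩
  set A := ∑' k : ℕ, ENNReal.ofReal (ϱ * (1 - ϱ) ^ k) * M.Pinf {ω | M.SR h ω ≤ (k : ℕ∞)} with hA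
  have hAC : A + ∑' k : ℕ, ENNReal.ofReal (ϱ * (1 - ϱ) ^ k) *
      M.Pinf {ω | M.SR h ω ≤ (k : ℕ∞)}ᶜ = 1 := by
    rw [hA, ← ENNReal.tsum_add]
    simp_rw [← mul_add, prob_add_prob_compl (M.F_le _ _ (hτ.2 _)), mul_one]
    simpa using tsum_geometric_tail hϱ 0
  have hbound : ENNReal.ofReal (ϱ * h) * A ≤ ∑' k : ℕ, ENNReal.ofReal (ϱ * (1 - ϱ) ^ k) *
      M.Pinf {ω | M.SR h ω ≤ (k : ℕ∞)}ᶜ := by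
    calc ENNReal.ofReal (ϱ * h) * A
        = ∑' n : ℕ, ENNReal.ofReal (ϱ * (1 - ϱ) ^ n) *
            (ENNReal.ofReal h * M.Pinf {ω | M.SR h ω = n}) := by
          rw [hA, hτ.tsum_falseAlarm_eq hϱ, ← ENNReal.tsum_mul_left]
          refine tsum_congr fun n => ?_
          rw [ENNReal.ofReal_mul hϱ0.le, ENNReal.ofReal_mul hϱ0.le]
          ring
      _ ≤ ∑' n : ℕ, ∑' k : ℕ, ENNReal.ofReal (ϱ * (1 - ϱ) ^ k) *
            (if k < n then M.P k {ω | M.SR h ω = n} else 0) := by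
          refine ENNReal.tsum_le_tsum fun n => ?_
          refine (mul_le_mul_right (M.threshold_mul_le (hτ.measurableSet_eq n)
            fun ω hω => M.SR_eq_coe hω) _).trans ?_
          rw [Finset.mul_sum]
          refine le_trans (Finset.sum_le_sum fun k hk => ?_) (ENNReal.sum_le_tsum (Finset.range n))
          have hkn := Finset.mem_range.1 hk
          rw [if_pos hkn]
          gcongr ENNReal.ofReal (ϱ * ?_) * _
          exact pow_le_pow_of_le_one hq hq1 hkn.le
      _ ≤ _ := by
          rw [ENNReal.tsum_comm]
          refine ENNReal.tsum_le_tsum fun k => ?_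
          rw [ENNReal.tsum_mul_left]
          gcongr
          exact hτ.tsum_measure_eq_le k
  have hfin : ENNReal.ofReal α⁻¹ * A ≤ 1 := by
    have he : α⁻¹ = 1 + ϱ * h := by
      rw [hh]
      field_simp
      ring
    rw [he, ENNReal.ofReal_add zero_le_one (by positivity), add_mul, ENNReal.ofReal_one, one_mul,
      ← hAC]
    gcongr
  rw [ENNReal.ofReal_inv_of_pos hα0, mul_comm, ← div_eq_mul_inv] at hfin
  simpa using (ENNReal.div_le_iff (by simpa using hα0) ENNReal.ofReal_ne_top).1 hfin
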